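/- There is a constant C > 0, depending only on n and α, such that for every open set F ⊆ B₁ ∩ Σ with smooth boundary and w(F) ≤ (1/2) w(B₁ ∩ Σ) one has w(F) ≤ C ∫_{∂F ∩ B₁ ∩ Σ} w dH^{n−1}. -/

import Mathlib

open MeasureTheory Metric Set
open scoped RealInnerProductSpace ENNReal NNReal Topology

noncomputable section

abbrev Euc (n : ℕ) := EuclideanSpace ℝ (Fin n)

def IsOpenConvexCone {n : ℕ} (S : Set (Euc n)) : Prop :=
  IsOpen S ∧ Convex ℝ S ∧ ∀ x ∈ S, ∀ t : ℝ, 0 < t → t • x ∈ S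

def IsAdmissibleWeight {n : ℕ} (S : Set (Euc n)) (α : ℝ) (w : Euc n → ℝ) : Prop :=
  ContinuousOn w (closure S) ∧ (∀ x ∈ closure S, 0 ≤ w x) ∧
  (∃ x ∈ closure S, w x ≠ 0) ∧
  (∀ x ∈ closure S, ∀ t : ℝ, 0 < t → w (t • x) = t ^ α * w x) ∧
  ConcaveOn ℝ S (fun x => w x ^ (1 / α))

def wVol {n : ℕ} (w : Euc n → ℝ) (E : Set (Euc n)) : ℝ≥0∞ :=
  ∫⁻ x in E, ENNReal.ofReal (w x)

def HasSmoothBoundary {n : ℕ} (E : Set (Euc n)) : Prop :=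
  ∃ f : Euc n → ℝ, ContDiff ℝ (⊤ : ℕ∞) f ∧ E = {x | f x < 0} ∧
    frontier E = {x | f x = 0} ∧ ∀ x ∈ frontier E, fderiv ℝ f x ≠ 0

/-!
Let `F ⊆ K` and consider the pairs `(x, y)` with `x ∈ F` and `y ∈ K \ F`. Fix `x`. The points `y`
whose midpoint with `x` lies in `F` are joined to that midpoint by a segment crossing `frontier F`
at a point `z` at least half as far from `x` as `y`: so `y` lies in the shadow of `z` seen from `x`,
stretched by a factor at most `2`, and concavity of `w ^ (1 / α)` gives `w y ≤ 2 ^ α * w z`. In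
dimension `d + 1`, the volume of the shadow of a set `T` is at most a constant times
`diam K * μH[d] T`, as one sees by covering `T` with small sets. Hence these `y` have total weight
at most `c * diam K * P`, where `P` is the weighted perimeter. The pairs whose midpoint is outside
`F` are treated in the same way with `x` and `y` exchanged, and integrating over all pairs gives
`w(F) * w(K \ F) ≤ c * diam K * P * w(K)`, where `w(K \ F) ≥ w(K) / 2`.
-/

open Module AffineMap

section LevelSet

variable {E F : Type*} [NormedAddCommGroup E] [NormedSpace ℝ E] [FiniteDimensional ℝ E]
  [MeasurableSpace E] [BorelSpace E] [NormedAddCommGroup F] [NormedSpace ℝ F]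
  [FiniteDimensional ℝ F]

theorem finiteAtFilter_hausdorffMeasure_levelSet {f : E → F} {f' : E →L[ℝ] F} {a : E}
    (hf : HasStrictFDerivAt f f' a) (hf' : f'.range = ⊤) :
    (μH[finrank ℝ f'.ker] : Measure E).FiniteAtFilter (𝓝[f ⁻¹' {f a}] a) := by
  set chart := hf.implicitToOpenPartialHomeomorph f f' hf'
  set param : f'.ker → E := hf.implicitFunction f f' hf' (f a)
  obtain ⟨L, s, hs, hL⟩ := (hf.to_implicitFunction hf').exists_lipschitzOnWith
  obtain ⟨k, hk, hks, hkc⟩ := local_compact_nhds hs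
  have hchart : ∀ᶠ x in 𝓝 a, (chart x).2 ∈ k := by
    have hcont : ContinuousAt (fun x => (chart x).2) a :=
      (chart.continuousAt (hf.mem_implicitToOpenPartialHomeomorph_source hf')).snd
    refine hcont (?_ : k ∈ 𝓝 (chart a).2)
    rwa [hf.implicitToOpenPartialHomeomorph_self hf']
  refine ⟨param '' k, ?_, ?_⟩
  · rw [mem_nhdsWithin_iff_eventually]
    filter_upwards [hchart, hf.eq_implicitFunction hf'] with x hxk hx hfx
    exact ⟨_, hxk, by rwa [mem_preimage.1 hfx] at hx⟩
  · calc μH[finrank ℝ f'.ker] (param '' k)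
        ≤ (L : ℝ≥0∞) ^ (finrank ℝ f'.ker : ℝ) * μH[finrank ℝ f'.ker] k :=
          (hL.mono hks).hausdorffMeasure_image_le (Nat.cast_nonneg _)
      _ < ∞ := ENNReal.mul_lt_top
          (ENNReal.rpow_lt_top_of_nonneg (Nat.cast_nonneg _) ENNReal.coe_ne_top) hkc.measure_lt_top

theorem hausdorffMeasure_lt_top_of_subset_levelSet {d : ℕ} (hd : finrank ℝ E = d + 1)
    {f : E → ℝ} {c : ℝ} {s : Set E} (hs : IsCompact s) (hsc : s ⊆ f ⁻¹' {c})
    (hf : ∀ x ∈ s, ContDiffAt ℝ 1 f x) (hf' : ∀ x ∈ s, fderiv ℝ f x ≠ 0) :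
    μH[d] s < ∞ := by
  refine hs.measure_lt_top_of_nhdsWithin fun x hx => ?_
  have hne : (fderiv ℝ f x : E →ₗ[ℝ] ℝ) ≠ 0 :=
    ContinuousLinearMap.coe_injective.ne (hf' x hx)
  have hker : finrank ℝ (fderiv ℝ f x).ker = d := by
    have := Dual.finrank_ker_add_one_of_ne_zero hne
    lia
  have hfin := finiteAtFilter_hausdorffMeasure_levelSet
    ((hf x hx).hasStrictFDerivAt one_ne_zero) (Dual.range_eq_top_of_ne_zero hne)
  rw [hker, mem_preimage.1 (hsc hx)] at hfin
  exact hfin.filter_mono (nhdsWithin_mono _ hsc)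

end LevelSet

section Shadow

variable {E : Type*} [NormedAddCommGroup E] [NormedSpace ℝ E]

/-- The shadow cast by `T` from a light source at `x`: behind each `z ∈ T`, only its part within
distance `2 * dist x z` of `x` is kept. -/
def shadow (x : E) (T : Set E) : Set E :=
  image2 (fun z s => lineMap x z s) T (Icc (1 : ℝ) 2)

theorem shadow_mono (x : E) {T T' : Set E} (h : T ⊆ T') : shadow x T ⊆ shadow x T' :=
  image2_subset_right h

theorem mem_shadow_singleton_of_lineMap {x y : E} {t : ℝ} (ht : t ∈ Icc (1 / 2 : ℝ) 1) :
    y ∈ shadow x {lineMap x y t} := by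
  have ht0 : 0 < t := by linarith [ht.1]
  refine ⟨_, rfl, t⁻¹, ⟨(one_le_inv₀ ht0).2 ht.2, ?_⟩, ?_⟩
  · rw [inv_le_comm₀ ht0 two_pos]
    linarith [ht.1]
  · simp [lineMap_apply, smul_smul, ht0.ne']

theorem shadow_subset_biUnion_closedBall {x a : E} {T : Set E} {R δ : ℝ} (hR : 0 < R)
    (hδ : 0 < δ) (hT : T ⊆ closedBall x R) (ha : T ⊆ closedBall a δ) :
    shadow x T ⊆ ⋃ j ∈ Finset.range (⌊R / δ⌋₊ + 1),
      closedBall (lineMap x a (1 + j * (δ / R))) (3 * δ) := by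
  rintro _ ⟨z, hz, s, ⟨hs1, hs2⟩, rfl⟩
  have hq : 0 ≤ (s - 1) * (R / δ) := mul_nonneg (by linarith) (by positivity)
  set j := ⌊(s - 1) * (R / δ)⌋₊
  set s' := 1 + j * (δ / R)
  have hjR : j * (δ / R) * (R / δ) = j := by field_simp
  have hle : s' ≤ s := by
    have : j * (δ / R) ≤ s - 1 := by
      rw [← mul_le_mul_iff_left₀ (div_pos hR hδ), hjR]
      exact Nat.floor_le hq
    linarith
  have hlt : s - s' ≤ δ / R := by
    have : s - 1 ≤ (j + 1) * (δ / R) := by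
      rw [← mul_le_mul_iff_left₀ (div_pos hR hδ), add_one_mul, add_mul, hjR,
        div_mul_div_cancel₀ hR.ne', div_self hδ.ne']
      exact (Nat.lt_floor_add_one _).le
    linarith
  have hs'0 : 0 ≤ s' := by positivity
  simp only [mem_iUnion, Finset.mem_range]
  refine ⟨j, Nat.lt_succ_of_le (Nat.floor_le_floor ?_), mem_closedBall.2 ?_⟩
  · exact mul_le_of_le_one_left (by positivity) (by linarith)
  · calc dist (lineMap x z s) (lineMap x a s')
        ≤ dist (lineMap x z s) (lineMap x z s') + dist (lineMap x z s') (lineMap x a s') :=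
          dist_triangle _ _ _
      _ = (s - s') * dist z x + s' * dist z a := by
          rw [dist_lineMap_lineMap, Real.dist_eq, abs_of_nonneg (sub_nonneg.2 hle), dist_comm x z,
            dist_eq_norm (lineMap x z s'), lineMap_apply_module', lineMap_apply_module',
            add_sub_add_right_eq_sub, ← smul_sub, sub_sub_sub_cancel_right, norm_smul,
            Real.norm_of_nonneg hs'0, ← dist_eq_norm]
      _ ≤ δ / R * R + 2 * δ := by
          gcongr
          · exact hT hz
          · linarith
          · exact ha hz
      _ = 3 * δ := by field_simp; ring

variable [MeasurableSpace E] (μ : Measure E)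

/-- The outer measure `T ↦ μ (shadow x T)`, to be compared with Hausdorff measure through
`OuterMeasure.mkMetric`. -/
def shadowOuterMeasure (x : E) : OuterMeasure E where
  measureOf T := μ (shadow x T)
  empty := by simp [shadow]
  mono h := measure_mono (shadow_mono x h)
  iUnion_nat T _ := by
    simp only [shadow, image2_iUnion_left]
    exact measure_iUnion_le _

theorem shadowOuterMeasure_apply (x : E) (T : Set E) :
    shadowOuterMeasure μ x T = μ (shadow x T) := rfl

/-- The constant `c` in the estimate `μ (shadow x T) ≤ c * R * μH[d] T` for `T ⊆ closedBall x R`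
in dimension `d + 1`. -/
def shadowConst : ℝ := 2 * 3 ^ finrank ℝ E * μ.real (closedBall 0 1)

variable [FiniteDimensional ℝ E] [μ.IsAddHaarMeasure]

theorem shadowConst_pos : 0 < shadowConst μ :=
  mul_pos (by positivity)
    (ENNReal.toReal_pos (measure_closedBall_pos μ _ one_pos).ne' measure_closedBall_lt_top.ne)

variable [BorelSpace E] {d : ℕ} (hd : finrank ℝ E = d + 1)
include hd

theorem measure_shadow_le_of_dist_le {x : E} {T : Set E} {R δ : ℝ} (hδ : 0 < δ) (hδR : δ ≤ R)
    (hT : T ⊆ closedBall x R) (hdist : ∀ a ∈ T, ∀ b ∈ T, dist a b ≤ δ) :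
    μ (shadow x T) ≤ ENNReal.ofReal (shadowConst μ * R * δ ^ d) := by
  rcases T.eq_empty_or_nonempty with rfl | ⟨a, ha⟩
  · simp [shadow]
  have hR : 0 < R := hδ.trans_le hδR
  have hcount : ((⌊R / δ⌋₊ + 1 : ℕ) : ℝ) ≤ 2 * (R / δ) := by
    have hfloor := Nat.floor_le (div_nonneg hR.le hδ.le)
    have hone := (one_le_div hδ).2 hδR
    push_cast
    linarith
  calc μ (shadow x T)
      ≤ ∑ j ∈ Finset.range (⌊R / δ⌋₊ + 1),
          μ (closedBall (lineMap x a (1 + j * (δ / R))) (3 * δ)) :=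
        (measure_mono (shadow_subset_biUnion_closedBall hR hδ hT fun b hb => hdist b hb a ha)).trans
          (measure_biUnion_finset_le _ _)
    _ = ∑ _j ∈ Finset.range (⌊R / δ⌋₊ + 1),
          ENNReal.ofReal ((3 * δ) ^ (d + 1) * μ.real (closedBall 0 1)) := by
        refine Finset.sum_congr rfl fun j _ => ?_
        rw [← ofReal_measureReal measure_closedBall_lt_top.ne,
          Measure.addHaar_real_closedBall' μ _ (by positivity), hd]
    _ = ENNReal.ofReal ((⌊R / δ⌋₊ + 1 : ℕ) * ((3 * δ) ^ (d + 1) * μ.real (closedBall 0 1))) := by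
        rw [Finset.sum_const, Finset.card_range, nsmul_eq_mul,
          ENNReal.ofReal_mul (Nat.cast_nonneg _), ENNReal.ofReal_natCast]
    _ ≤ ENNReal.ofReal (2 * (R / δ) * ((3 * δ) ^ (d + 1) * μ.real (closedBall 0 1))) := by
        gcongr
    _ = ENNReal.ofReal (shadowConst μ * R * δ ^ d) := by
        rw [shadowConst, hd]
        congr 1
        field_simp
        ring

theorem measure_shadow_le_ediam_pow {x : E} {T : Set E} {R : ℝ} (hT : T ⊆ closedBall x R)
    (hdiam : ediam T < ENNReal.ofReal R) :
    μ (shadow x T) ≤ ENNReal.ofReal (shadowConst μ * R) * ediam T ^ d := by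
  have hfin : ediam T ≠ ∞ := hdiam.ne_top
  have hlt : diam T < R := (ENNReal.lt_ofReal_iff_toReal_lt hfin).1 hdiam
  have hlim : Filter.Tendsto (fun δ : ℝ => ENNReal.ofReal (shadowConst μ * R * δ ^ d))
      (𝓝[>] diam T) (𝓝 (ENNReal.ofReal (shadowConst μ * R * diam T ^ d))) :=
    ((ENNReal.continuous_ofReal.comp (by fun_prop)).tendsto _).mono_left nhdsWithin_le_nhds
  rw [← ENNReal.ofReal_toReal hfin, ← ENNReal.ofReal_pow ENNReal.toReal_nonneg,
    ← ENNReal.ofReal_mul' (pow_nonneg ENNReal.toReal_nonneg d)]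
  refine ge_of_tendsto hlim ?_
  filter_upwards [Ioo_mem_nhdsGT hlt] with δ hδ
  exact measure_shadow_le_of_dist_le μ hd (diam_nonneg.trans_lt hδ.1) hδ.2.le hT
    fun a ha b hb => (dist_le_diam_of_mem' hfin ha hb).trans hδ.1.le

theorem measure_shadow_le {x : E} {T : Set E} {R : ℝ} (hR : 0 < R) (hT : T ⊆ closedBall x R) :
    μ (shadow x T) ≤ ENNReal.ofReal (shadowConst μ * R) * μH[d] T := by
  set c := ENNReal.ofReal (shadowConst μ * R)
  have hc : c ≠ 0 := by simpa [c] using mul_pos (shadowConst_pos μ) hR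
  have hle : OuterMeasure.restrict (closedBall x R) (shadowOuterMeasure μ x) ≤
      OuterMeasure.mkMetric (c • fun r : ℝ≥0∞ => r ^ (d : ℝ)) := by
    refine OuterMeasure.le_mkMetric _ _ (ENNReal.ofReal (R / 2)) (by simpa) fun s hs => ?_
    have hlt : ediam (s ∩ closedBall x R) < ENNReal.ofReal R :=
      (ediam_mono inter_subset_left).trans_lt <|
        hs.trans_lt ((ENNReal.ofReal_lt_ofReal_iff hR).2 (half_lt_self hR))
    rw [OuterMeasure.restrict_apply, shadowOuterMeasure_apply]
    calc μ (shadow x (s ∩ closedBall x R))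
        ≤ c * ediam (s ∩ closedBall x R) ^ d :=
          measure_shadow_le_ediam_pow μ hd inter_subset_right hlt
      _ ≤ c * ediam s ^ (d : ℝ) := by
          rw [ENNReal.rpow_natCast]
          gcongr
          exact inter_subset_left
  rw [OuterMeasure.mkMetric_smul _ ENNReal.ofReal_ne_top hc] at hle
  have hleT := hle T
  rw [OuterMeasure.restrict_apply, shadowOuterMeasure_apply] at hleT
  calc μ (shadow x T) = μ (shadow x (T ∩ closedBall x R)) := by rw [inter_eq_left.2 hT]
    _ ≤ c * OuterMeasure.mkMetric (fun r : ℝ≥0∞ => r ^ (d : ℝ)) T := hleT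
    _ = c * μH[d] T := by rw [OuterMeasure.coe_mkMetric, Measure.hausdorffMeasure]

theorem setLIntegral_ofReal_le_of_mem_shadow {x : E} {A M : Set E} {R : ℝ} (hR : 0 < R)
    (hA : MeasurableSet A) (hM : MeasurableSet M) (hMR : M ⊆ closedBall x R) {f g : E → ℝ}
    (hf : AEMeasurable f (μ.restrict A)) (hg : AEMeasurable g (μH[d].restrict M))
    (hf0 : ∀ y ∈ A, 0 ≤ f y) (hg0 : ∀ z ∈ M, 0 ≤ g z)
    (h : ∀ y ∈ A, ∃ z ∈ M, y ∈ shadow x {z} ∧ f y ≤ g z) :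
    ∫⁻ y in A, ENNReal.ofReal (f y) ∂μ ≤
      ENNReal.ofReal (shadowConst μ * R) * ∫⁻ z in M, ENNReal.ofReal (g z) ∂μH[d] := by
  rw [lintegral_eq_lintegral_meas_lt _ (ae_restrict_of_forall_mem hA hf0) hf,
    lintegral_eq_lintegral_meas_lt _ (ae_restrict_of_forall_mem hM hg0) hg,
    ← lintegral_const_mul' _ _ ENNReal.ofReal_ne_top]
  refine lintegral_mono fun t => ?_
  have hsub : {y | t < f y} ∩ A ⊆ shadow x ({z | t < g z} ∩ M) := by
    rintro y ⟨hty, hyA⟩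
    obtain ⟨z, hzM, hyz, hle⟩ := h y hyA
    refine shadow_mono x ?_ hyz
    exact singleton_subset_iff.2 ⟨lt_of_lt_of_le hty hle, hzM⟩
  rw [Measure.restrict_apply' hA, Measure.restrict_apply' hM]
  exact (measure_mono hsub).trans (measure_shadow_le μ hd hR (inter_subset_right.trans hMR))

end Shadow

section SectionBound

variable {X Y : Type*} [MeasurableSpace X] [MeasurableSpace Y]

theorem measure_mul_measure_le_of_section_le (μ : Measure X) (ν : Measure Y) [SFinite μ]
    [SFinite ν] {A : Set X} {B : Set Y} {Q : Set (X × Y)} {b : ℝ≥0∞} (hA : MeasurableSet A)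
    (hB : MeasurableSet B) (hQ : MeasurableSet Q)
    (hleft : ∀ x ∈ A, ν (Prod.mk x ⁻¹' Q ∩ B) ≤ b)
    (hright : ∀ y ∈ B, μ ((fun x => (x, y)) ⁻¹' Qᶜ ∩ A) ≤ b) :
    μ A * ν B ≤ b * (μ A + ν B) := by
  have hin : (μ.restrict A).prod (ν.restrict B) Q ≤ b * μ A := by
    rw [Measure.prod_apply hQ, ← setLIntegral_const]
    refine setLIntegral_mono' hA fun x hx => ?_
    rw [Measure.restrict_apply' hB]
    exact hleft x hx
  have hout : (μ.restrict A).prod (ν.restrict B) Qᶜ ≤ b * ν B := by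
    rw [Measure.prod_apply_symm hQ.compl, ← setLIntegral_const]
    refine setLIntegral_mono' hB fun y hy => ?_
    rw [Measure.restrict_apply' hA]
    exact hright y hy
  calc μ A * ν B = (μ.restrict A).prod (ν.restrict B) univ := by
        rw [← univ_prod_univ, Measure.prod_prod, Measure.restrict_apply_univ,
          Measure.restrict_apply_univ]
    _ = (μ.restrict A).prod (ν.restrict B) Q + (μ.restrict A).prod (ν.restrict B) Qᶜ :=
        (measure_add_measure_compl hQ).symm
    _ ≤ b * (μ A + ν B) := by
        rw [mul_add]
        exact add_le_add hin hout

end SectionBound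

theorem ofReal_setIntegral_eq_of_bddAbove {X : Type*} [MeasurableSpace X] {μ : Measure X}
    {s : Set X} (hs : MeasurableSet s) (hμ : μ s < ∞) {f : X → ℝ}
    (hf : AEStronglyMeasurable f (μ.restrict s)) (hf0 : ∀ x ∈ s, 0 ≤ f x)
    (hbdd : BddAbove (f '' s)) :
    ENNReal.ofReal (∫ x in s, f x ∂μ) = ∫⁻ x in s, ENNReal.ofReal (f x) ∂μ := by
  obtain ⟨M, hM⟩ := hbdd
  refine ofReal_integral_eq_lintegral_ofReal ?_ (ae_restrict_of_forall_mem hs hf0)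
  refine IntegrableOn.of_bound hμ hf M (ae_restrict_of_forall_mem hs fun x hx => ?_)
  rw [Real.norm_of_nonneg (hf0 x hx)]
  exact hM (mem_image_of_mem f hx)

section Frontier

variable {E : Type*} [NormedAddCommGroup E] [NormedSpace ℝ E]

theorem exists_lineMap_mem_frontier {F : Set E} {x y : E}
    (h : ¬(midpoint ℝ x y ∈ F ↔ y ∈ F)) :
    ∃ t ∈ Icc (1 / 2 : ℝ) 1, lineMap x y t ∈ frontier F := by
  have : PreconnectedSpace (Icc (1 / 2 : ℝ) 1) := Subtype.preconnectedSpace isPreconnected_Icc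
  set γ : Icc (1 / 2 : ℝ) 1 → E := fun t => lineMap x y (t : ℝ)
  have hγ : Continuous γ := lineMap_continuous.comp continuous_subtype_val
  have hmid : γ ⟨1 / 2, by norm_num⟩ = midpoint ℝ x y :=
    lineMap_one_half x y
  have hend : γ ⟨1, by norm_num⟩ = y := by simp [γ]
  rw [← hmid, ← hend] at h
  have hne : (frontier (γ ⁻¹' F)).Nonempty := by
    refine nonempty_frontier_iff.2 ⟨?_, fun huniv => h ?_⟩
    · by_contra! hempty
      exact h (iff_of_false (hempty.subset ·) (hempty.subset ·))
    · exact iff_of_true (huniv.superset trivial) (huniv.superset trivial)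
  obtain ⟨t, ht⟩ := hne
  exact ⟨t, t.2, hγ.frontier_preimage_subset F ht⟩

end Frontier

section ConcavePower

variable {E : Type*} [NormedAddCommGroup E] [NormedSpace ℝ E] {K : Set E} {α : ℝ} {w : E → ℝ}
  (hα : 0 < α) (hw0 : ∀ x ∈ K, 0 ≤ w x) (hw : ConcaveOn ℝ K fun x => w x ^ (1 / α))
include hα hw0 hw

theorem rpow_mul_le_lineMap_of_concaveOn_rpow {x y : E} (hx : x ∈ K) (hy : y ∈ K) {t : ℝ}
    (ht : t ∈ Icc (0 : ℝ) 1) : t ^ α * w y ≤ w (lineMap x y t) := by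
  have hz : lineMap x y t ∈ K := hw.1.lineMap_mem hx hy ht
  have hroot : t * w y ^ (1 / α) ≤ w (lineMap x y t) ^ (1 / α) := by
    have hconc := hw.2 hx hy (sub_nonneg.2 ht.2) ht.1 (sub_add_cancel 1 t)
    simp only [smul_eq_mul, ← lineMap_apply_module x y t] at hconc
    exact (le_add_of_nonneg_left
      (mul_nonneg (sub_nonneg.2 ht.2) (Real.rpow_nonneg (hw0 x hx) _))).trans hconc
  have hpow := Real.rpow_le_rpow (mul_nonneg ht.1 (Real.rpow_nonneg (hw0 y hy) _)) hroot hα.le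
  rwa [Real.mul_rpow ht.1 (Real.rpow_nonneg (hw0 y hy) _), one_div,
    Real.rpow_inv_rpow (hw0 y hy) hα.ne', Real.rpow_inv_rpow (hw0 _ hz) hα.ne'] at hpow

theorem continuousOn_of_concaveOn_rpow [FiniteDimensional ℝ E] (hK : IsOpen K) :
    ContinuousOn w K := by
  refine ((hw.continuousOn hK).rpow_const fun _ _ => Or.inr hα.le).congr fun x hx => ?_
  simp only [one_div, Real.rpow_inv_rpow (hw0 x hx) hα.ne']

theorem bddAbove_image_of_concaveOn_rpow (hK : IsOpen K) (hKb : Bornology.IsBounded K) :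
    BddAbove (w '' K) := by
  rcases K.eq_empty_or_nonempty with rfl | ⟨p, hp⟩
  · simp
  obtain ⟨ε, hε, hball⟩ := Metric.isOpen_iff.1 hK p hp
  obtain ⟨R, hR, hKR⟩ := hKb.subset_closedBall_lt 0 p
  set s := ε / (2 * R)
  have hs : 0 < s := by positivity
  refine ⟨w p / (s / (1 + s)) ^ α, ?_⟩
  rintro _ ⟨y, hy, rfl⟩
  -- `p` lies between `y` and a point of `K` on the other side, in a ratio independent of `y`.
  set z := p + s • (p - y)
  have hz : z ∈ K := by
    refine hball ?_
    calc dist z p = s * dist y p := by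
          simp [z, norm_smul, abs_of_pos hs, dist_eq_norm, norm_sub_rev y p]
      _ ≤ s * R := by gcongr; exact hKR hy
      _ < ε := by simp only [s]; field_simp; linarith
  have hp : lineMap z y (s / (1 + s)) = p := by
    rw [lineMap_apply_module']
    simp only [z]
    match_scalars <;> field_simp <;> ring
  rw [le_div_iff₀' (by positivity), ← hp]
  exact rpow_mul_le_lineMap_of_concaveOn_rpow hα hw0 hw hz hy
    ⟨by positivity, (div_le_one (by positivity)).2 (by linarith)⟩

theorem exists_mem_frontier_le_of_concaveOn_rpow {F : Set E} {x y : E} (hx : x ∈ K) (hy : y ∈ K)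
    (h : ¬(midpoint ℝ x y ∈ F ↔ y ∈ F)) :
    ∃ z ∈ frontier F ∩ K, y ∈ shadow x {z} ∧ w y ≤ 2 ^ α * w z := by
  obtain ⟨t, ht, hzF⟩ := exists_lineMap_mem_frontier h
  have ht' : t ∈ Icc (0 : ℝ) 1 := ⟨by linarith [ht.1], ht.2⟩
  refine ⟨_, ⟨hzF, hw.1.lineMap_mem hx hy ht'⟩, mem_shadow_singleton_of_lineMap ht, ?_⟩
  calc w y = 2 ^ α * ((1 / 2) ^ α * w y) := by
        rw [← mul_assoc, ← Real.mul_rpow (by norm_num) (by norm_num)]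
        norm_num
    _ ≤ 2 ^ α * (t ^ α * w y) := by
        have := hw0 y hy
        gcongr
        exact ht.1
    _ ≤ 2 ^ α * w (lineMap x y t) := by
        gcongr
        exact rpow_mul_le_lineMap_of_concaveOn_rpow hα hw0 hw hx hy ht'

end ConcavePower

section Isoperimetric

variable {E : Type*} [NormedAddCommGroup E] [NormedSpace ℝ E] [FiniteDimensional ℝ E]
  [MeasurableSpace E] [BorelSpace E] (μ : Measure E) [μ.IsAddHaarMeasure]
  {d : ℕ} (hd : finrank ℝ E = d + 1) {K F : Set E} {α : ℝ} {w : E → ℝ}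
  (hα : 0 < α) (hw0 : ∀ x ∈ K, 0 ≤ w x) (hw : ConcaveOn ℝ K fun x => w x ^ (1 / α))
  (hK : IsOpen K) (hKb : Bornology.IsBounded K)
include hd hα hw0 hw hK hKb

theorem setLIntegral_le_of_midpoint_separated {A : Set E} {x : E} (hx : x ∈ K)
    (hA : MeasurableSet A) (hAK : A ⊆ K) (h : ∀ y ∈ A, ¬(midpoint ℝ x y ∈ F ↔ y ∈ F)) :
    ∫⁻ y in A, ENNReal.ofReal (w y) ∂μ ≤ ENNReal.ofReal (shadowConst μ * diam K * 2 ^ α) *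
      ∫⁻ z in frontier F ∩ K, ENNReal.ofReal (w z) ∂μH[d] := by
  have := nontrivial_of_finrank_eq_succ hd
  have hdiam : 0 < diam K := diam_pos (infinite_of_mem_nhds x (hK.mem_nhds hx)).nontrivial hKb
  have hcont := continuousOn_of_concaveOn_rpow hα hw0 hw hK
  have hM : MeasurableSet (frontier F ∩ K) := isClosed_frontier.measurableSet.inter hK.measurableSet
  have hscale : ∫⁻ z in frontier F ∩ K, ENNReal.ofReal (2 ^ α * w z) ∂μH[d] =
      ENNReal.ofReal (2 ^ α) * ∫⁻ z in frontier F ∩ K, ENNReal.ofReal (w z) ∂μH[d] := by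
    rw [← lintegral_const_mul' _ _ ENNReal.ofReal_ne_top]
    simp_rw [ENNReal.ofReal_mul (Real.rpow_nonneg zero_le_two α)]
  rw [ENNReal.ofReal_mul (mul_nonneg (shadowConst_pos μ).le diam_nonneg), mul_assoc, ← hscale]
  exact setLIntegral_ofReal_le_of_mem_shadow μ hd hdiam hA hM
    (fun z hz => dist_le_diam_of_mem hKb hz.2 hx)
    ((hcont.mono hAK).aemeasurable hA)
    (((hcont.mono inter_subset_right).aemeasurable hM).const_mul _) (fun y hy => hw0 y (hAK hy))
    (fun z hz => mul_nonneg (by positivity) (hw0 z hz.2))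
    fun y hy => exists_mem_frontier_le_of_concaveOn_rpow hα hw0 hw hx (hAK hy) (h y hy)

theorem setLIntegral_mul_setLIntegral_diff_le (hF : MeasurableSet F) (hFK : F ⊆ K) :
    (∫⁻ x in F, ENNReal.ofReal (w x) ∂μ) * ∫⁻ x in K \ F, ENNReal.ofReal (w x) ∂μ ≤
      ENNReal.ofReal (shadowConst μ * diam K * 2 ^ α) *
        (∫⁻ z in frontier F ∩ K, ENNReal.ofReal (w z) ∂μH[d]) *
          ∫⁻ x in K, ENNReal.ofReal (w x) ∂μ := by
  have hG : MeasurableSet (K \ F) := hK.measurableSet.diff hF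
  have hQ : MeasurableSet {p : E × E | midpoint ℝ p.1 p.2 ∈ F} :=
    Continuous.measurable (by simp only [midpoint_eq_smul_add]; fun_prop) hF
  have hbound := fun {A : Set E} {x : E} =>
    setLIntegral_le_of_midpoint_separated (F := F) (A := A) (x := x) μ hd hα hw0 hw hK hKb
  set ν := μ.withDensity fun x => ENNReal.ofReal (w x)
  have hν (A : Set E) : ∫⁻ x in A, ENNReal.ofReal (w x) ∂μ = ν A := (withDensity_apply' _ A).symm
  simp only [hν] at hbound ⊢
  have hsum : ν F + ν (K \ F) = ν K := by
    rw [← measure_union disjoint_sdiff_right hG, union_sdiff_cancel hFK]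
  rw [← hsum]
  refine measure_mul_measure_le_of_section_le ν ν hF hG hQ (fun x hx => ?_) fun y hy => ?_
  · refine hbound (hFK hx) ((hQ.preimage measurable_prodMk_left).inter hG)
      (inter_subset_right.trans sdiff_subset) ?_
    rintro y ⟨hmid, hyG⟩ hiff
    exact hyG.2 (hiff.1 hmid)
  · refine hbound hy.1 ((hQ.compl.preimage measurable_prodMk_right).inter hF)
      (inter_subset_right.trans hFK) ?_
    rintro x ⟨hmid, hxF⟩ hiff
    exact hmid ((midpoint_comm x y (R := ℝ)).symm ▸ hiff.2 hxF : midpoint ℝ x y ∈ F)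

theorem setLIntegral_le_of_two_mul_le (hF : MeasurableSet F) (hFK : F ⊆ K)
    (hhalf : 2 * ∫⁻ x in F, ENNReal.ofReal (w x) ∂μ ≤ ∫⁻ x in K, ENNReal.ofReal (w x) ∂μ) :
    ∫⁻ x in F, ENNReal.ofReal (w x) ∂μ ≤ 2 * (ENNReal.ofReal (shadowConst μ * diam K * 2 ^ α) *
      ∫⁻ z in frontier F ∩ K, ENNReal.ofReal (w z) ∂μH[d]) := by
  have hprod := setLIntegral_mul_setLIntegral_diff_le μ hd hα hw0 hw hK hKb hF hFK
  have hfin : ∫⁻ x in K, ENNReal.ofReal (w x) ∂μ < ∞ := by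
    refine setLIntegral_lt_top_of_bddAbove hKb.measure_lt_top.ne (f := fun x => (w x).toNNReal) ?_
    have hbdd := bddAbove_image_of_concaveOn_rpow hα hw0 hw hK hKb
    simpa only [image_image] using Real.toNNReal_monotone.map_bddAbove hbdd
  have hsum := lintegral_inter_add_sdiff (fun x => ENNReal.ofReal (w x)) K hF (μ := μ)
  rw [inter_eq_right.2 hFK] at hsum
  set f := ∫⁻ x in F, ENNReal.ofReal (w x) ∂μ
  set g := ∫⁻ x in K \ F, ENNReal.ofReal (w x) ∂μ
  set k := ∫⁻ x in K, ENNReal.ofReal (w x) ∂μ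
  have hffin : f ≠ ∞ := ne_top_of_le_ne_top hfin.ne (hsum ▸ le_self_add)
  have hfg : f ≤ g := by
    rwa [← hsum, two_mul, ENNReal.add_le_add_iff_left hffin] at hhalf
  rcases eq_or_ne k 0 with hk0 | hk0
  · have hf0 : f = 0 := (add_eq_zero.1 (hsum.trans hk0)).1
    simp [hf0]
  · rw [← ENNReal.mul_le_mul_iff_left hk0 hfin.ne]
    calc f * k = f * (f + g) := by rw [hsum]
      _ ≤ f * (g + g) := by gcongr
      _ = 2 * (f * g) := by ring
      _ ≤ 2 * (ENNReal.ofReal (shadowConst μ * diam K * 2 ^ α) * _ * k) := by gcongr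
      _ = _ := by ring

end Isoperimetric

theorem HasSmoothBoundary.isOpen {n : ℕ} {F : Set (Euc n)} (hF : HasSmoothBoundary F) :
    IsOpen F := by
  obtain ⟨f, hf, rfl, -⟩ := hF
  exact isOpen_lt hf.continuous continuous_const

theorem HasSmoothBoundary.hausdorffMeasure_frontier_lt_top {d : ℕ} {F : Set (Euc (d + 1))}
    (hF : HasSmoothBoundary F) (hFb : Bornology.IsBounded F) : μH[d] (frontier F) < ∞ := by
  obtain ⟨f, hf, -, hzero, hne⟩ := hF
  exact hausdorffMeasure_lt_top_of_subset_levelSet finrank_euclideanSpace_fin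
    (hFb.isCompact_closure.of_isClosed_subset isClosed_frontier frontier_subset_closure)
    hzero.subset (fun x _ => (hf.of_le (mod_cast le_top)).contDiffAt) hne

theorem HasSmoothBoundary.ofReal_setIntegral_frontier_inter {d : ℕ} {α : ℝ}
    {K F : Set (Euc (d + 1))} {w : Euc (d + 1) → ℝ} (hF : HasSmoothBoundary F) (hFK : F ⊆ K)
    (hα : 0 < α) (hK : IsOpen K) (hKb : Bornology.IsBounded K) (hw0 : ∀ x ∈ K, 0 ≤ w x)
    (hw : ConcaveOn ℝ K fun x => w x ^ (1 / α)) :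
    ENNReal.ofReal (∫ x in frontier F ∩ K, w x ∂μH[d]) =
      ∫⁻ x in frontier F ∩ K, ENNReal.ofReal (w x) ∂μH[d] := by
  have hM : MeasurableSet (frontier F ∩ K) := isClosed_frontier.measurableSet.inter hK.measurableSet
  have hcont : ContinuousOn w (frontier F ∩ K) :=
    (continuousOn_of_concaveOn_rpow hα hw0 hw hK).mono inter_subset_right
  have hfin : μH[d] (frontier F ∩ K) < ∞ :=
    (measure_mono inter_subset_left).trans_lt (hF.hausdorffMeasure_frontier_lt_top (hKb.subset hFK))
  have hbdd : BddAbove (w '' (frontier F ∩ K)) :=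
    (bddAbove_image_of_concaveOn_rpow hα hw0 hw hK hKb).mono (image_mono inter_subset_right)
  exact ofReal_setIntegral_eq_of_bddAbove hM hfin (hcont.aestronglyMeasurable hM)
    (fun x hx => hw0 x hx.2) hbdd

theorem stmt_17_general {n : ℕ} (hn : 1 ≤ n) (α : ℝ) (hα : 0 < α) :
    ∃ C : ℝ, 0 < C ∧
      ∀ (K : Set (Euc n)) (p : Euc n) (R : ℝ), IsOpen K → K ⊆ ball p R →
      ∀ w : Euc n → ℝ, (∀ x ∈ K, 0 ≤ w x) → ConcaveOn ℝ K (fun x => w x ^ (1 / α)) →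
      ∀ F : Set (Euc n), F ⊆ K → HasSmoothBoundary F →
        2 * wVol w F ≤ wVol w K →
        wVol w F ≤
          ENNReal.ofReal (C * R * ∫ x in frontier F ∩ K, w x ∂(μH[(n : ℝ) - 1])) := by
  obtain ⟨d, rfl⟩ := Nat.exists_eq_add_of_le' hn
  rw [Nat.cast_add_one, add_sub_cancel_right]
  set c := shadowConst (volume : Measure (Euc (d + 1)))
  have hc : 0 < c := shadowConst_pos _
  refine ⟨4 * c * 2 ^ α, by positivity, fun K p R hK hKR w hw0 hw F hFK hF hhalf => ?_⟩
  rcases F.eq_empty_or_nonempty with rfl | ⟨x, hxF⟩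
  · simp [wVol]
  have hR : 0 < R := pos_of_mem_ball (hKR (hFK hxF))
  have hKb : Bornology.IsBounded K := isBounded_ball.subset hKR
  have hdiam : diam K ≤ 2 * R := (diam_mono hKR isBounded_ball).trans (diam_ball hR.le)
  calc wVol w F
      ≤ 2 * (ENNReal.ofReal (c * diam K * 2 ^ α) *
          ∫⁻ x in frontier F ∩ K, ENNReal.ofReal (w x) ∂μH[d]) :=
        setLIntegral_le_of_two_mul_le volume finrank_euclideanSpace_fin hα hw0 hw hK hKb
          hF.isOpen.measurableSet hFK hhalf
    _ ≤ 2 * (ENNReal.ofReal (c * (2 * R) * 2 ^ α) *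
          ∫⁻ x in frontier F ∩ K, ENNReal.ofReal (w x) ∂μH[d]) := by gcongr
    _ = ENNReal.ofReal (2 * (c * (2 * R) * 2 ^ α * ∫ x in frontier F ∩ K, w x ∂μH[d])) := by
        rw [ENNReal.ofReal_mul zero_le_two, ENNReal.ofReal_ofNat,
          ENNReal.ofReal_mul (p := c * (2 * R) * 2 ^ α) (by positivity),
          hF.ofReal_setIntegral_frontier_inter hFK hα hK hKb hw0 hw]
    _ = ENNReal.ofReal (4 * c * 2 ^ α * R * ∫ x in frontier F ∩ K, w x ∂μH[d]) := by
        ring_nf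

/-- Relative weighted isoperimetric inequality in the unit ball of the cone;
the constant depends only on `n` and `α`. -/
theorem stmt_17 {n : ℕ} (hn : 1 ≤ n) (α : ℝ) (hα : 0 < α) :
    ∃ C : ℝ, 0 < C ∧
      ∀ S : Set (Euc n), IsOpenConvexCone S →
      ∀ w : Euc n → ℝ, IsAdmissibleWeight S α w →
        wVol w (ball (0 : Euc n) 1 ∩ S) = 1 →
      ∀ F : Set (Euc n), F ⊆ ball (0 : Euc n) 1 ∩ S → IsOpen F → HasSmoothBoundary F →
        2 * wVol w F ≤ wVol w (ball (0 : Euc n) 1 ∩ S) →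
        wVol w F ≤
          ENNReal.ofReal
            (C * ∫ x in frontier F ∩ ball (0 : Euc n) 1 ∩ S, w x ∂(μH[(n : ℝ) - 1])) := by
  obtain ⟨C, hC, h⟩ := stmt_17_general hn α hα
  refine ⟨C, hC, fun S ⟨hS, hSconv, _⟩ w ⟨_, hw0, _, _, hw⟩ _ F hFK _ hF hhalf => ?_⟩
  simpa only [mul_one, inter_assoc] using h _ 0 1 (isOpen_ball.inter hS) inter_subset_left w
    (fun x hx => hw0 x (subset_closure hx.2))
    (hw.subset inter_subset_right ((convex_ball 0 1).inter hSconv)) F hFK hF hhalf
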